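/- arXiv:math/0502056 — 2 statements merged into one kernel-verified Lean document; each statement's English description precedes it below -/
import Mathlib

section
/- For every s, t > 0, the map U_{s,t}(X,Y) = ((t−s)/2)·([X₂,Y₃] + [Y₂,X₃]) + ((t−1)/(2s))·([X₁,Y₃] + [Y₁,X₃]) + ((s−1)/(2t))·([X₁,Y₂] + [Y₁,X₂]) takes values in 𝔪 and is the unique symmetric bilinear map U : 𝔪 × 𝔪 → 𝔪 satisfying 2·g_{s,t}(U(X,Y), Z) = g_{s,t}(X, [Z,Y]_𝔪) + g_{s,t}([Z,X]_𝔪, Y) for all X, Y, Z ∈ 𝔪. (U_{s,t} is the symmetric part of the Nomizu function of the Levi-Civita connection of the invariant metric with characteristic numbers (s,t).) -/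
open Matrix

namespace FlagMfld

variable {n : ℕ}

/-- Membership in `so(n)`: real skew-symmetric `n×n` matrices. -/
def inSO (X : Matrix (Fin n) (Fin n) ℝ) : Prop := Xᵀ = -X

/-- The isotropy subalgebra `𝔥 ≅ so(2) ⊕ so(n-3)`: skew matrices whose only (possibly)
nonzero entries are `H₂₃`, `H₃₂` and `H_{ij}` with `i,j ≥ 4` (1-based indexing; indices are
0-based in the formalization, so the allowed positions are `(1,2)`, `(2,1)` and `i,j ≥ 3`). -/
def inH (X : Matrix (Fin n) (Fin n) ℝ) : Prop :=
  Xᵀ = -X ∧ ∀ i j : Fin n, X i j ≠ 0 →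
    (i.val = 1 ∧ j.val = 2) ∨ (i.val = 2 ∧ j.val = 1) ∨ (3 ≤ i.val ∧ 3 ≤ j.val)

/-- The canonical reductive complement `𝔪`: skew matrices with `S₂₃ = 0` and `S_{ij} = 0`
for all `i,j ≥ 4` (1-based). -/
def inM (X : Matrix (Fin n) (Fin n) ℝ) : Prop :=
  Xᵀ = -X ∧ (∀ i j : Fin n, i.val = 1 → j.val = 2 → X i j = 0) ∧
    ∀ i j : Fin n, 3 ≤ i.val → 3 ≤ j.val → X i j = 0

/-- `𝔪₁`: only `S₁₂`, `S₁₃` (and skew partners) may be nonzero. -/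
def inM1 (X : Matrix (Fin n) (Fin n) ℝ) : Prop :=
  Xᵀ = -X ∧ ∀ i j : Fin n, X i j ≠ 0 →
    (i.val = 0 ∧ (j.val = 1 ∨ j.val = 2)) ∨ (j.val = 0 ∧ (i.val = 1 ∨ i.val = 2))

/-- `𝔪₂`: only `S_{2j}`, `S_{3j}` for `j ≥ 4` (and skew partners) may be nonzero. -/
def inM2 (X : Matrix (Fin n) (Fin n) ℝ) : Prop :=
  Xᵀ = -X ∧ ∀ i j : Fin n, X i j ≠ 0 →
    ((i.val = 1 ∨ i.val = 2) ∧ 3 ≤ j.val) ∨ ((j.val = 1 ∨ j.val = 2) ∧ 3 ≤ i.val)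

/-- `𝔪₃`: only `S_{1j}` for `j ≥ 4` (and skew partners) may be nonzero. -/
def inM3 (X : Matrix (Fin n) (Fin n) ℝ) : Prop :=
  Xᵀ = -X ∧ ∀ i j : Fin n, X i j ≠ 0 →
    (i.val = 0 ∧ 3 ≤ j.val) ∨ (j.val = 0 ∧ 3 ≤ i.val)

/-- Component along `𝔪₁` of the decomposition `𝔪 = 𝔪₁ ⊕ 𝔪₂ ⊕ 𝔪₃` (entrywise). -/
def p1 (X : Matrix (Fin n) (Fin n) ℝ) : Matrix (Fin n) (Fin n) ℝ :=
  Matrix.of fun i j =>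
    if (i.val = 0 ∧ (j.val = 1 ∨ j.val = 2)) ∨ (j.val = 0 ∧ (i.val = 1 ∨ i.val = 2))
    then X i j else 0

/-- Component along `𝔪₂`. -/
def p2 (X : Matrix (Fin n) (Fin n) ℝ) : Matrix (Fin n) (Fin n) ℝ :=
  Matrix.of fun i j =>
    if ((i.val = 1 ∨ i.val = 2) ∧ 3 ≤ j.val) ∨ ((j.val = 1 ∨ j.val = 2) ∧ 3 ≤ i.val)
    then X i j else 0

/-- Component along `𝔪₃`. -/
def p3 (X : Matrix (Fin n) (Fin n) ℝ) : Matrix (Fin n) (Fin n) ℝ :=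
  Matrix.of fun i j =>
    if (i.val = 0 ∧ 3 ≤ j.val) ∨ (j.val = 0 ∧ 3 ≤ i.val) then X i j else 0

/-- Projection of `so(n)` onto `𝔪` along `𝔥` (kills the entries at `𝔥`-positions). -/
def pM (X : Matrix (Fin n) (Fin n) ℝ) : Matrix (Fin n) (Fin n) ℝ :=
  Matrix.of fun i j =>
    if (i.val = 1 ∧ j.val = 2) ∨ (i.val = 2 ∧ j.val = 1) ∨ (3 ≤ i.val ∧ 3 ≤ j.val)
    then 0 else X i j

/-- Matrix commutator `[X,Y] = XY - YX`. -/
def br (X Y : Matrix (Fin n) (Fin n) ℝ) : Matrix (Fin n) (Fin n) ℝ := X * Y - Y * X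

/-- The naturally reductive metric `g₀(X,Y) = (n-1)·Tr(XᵀY)`. -/
noncomputable def g0 (X Y : Matrix (Fin n) (Fin n) ℝ) : ℝ :=
  ((n : ℝ) - 1) * (Xᵀ * Y).trace

/-- The invariant metric with characteristic numbers `(s,t)`:
`g_{s,t}(X,Y) = g₀(X₁,Y₁) + s·g₀(X₂,Y₂) + t·g₀(X₃,Y₃)`. -/
noncomputable def gst (s t : ℝ) (X Y : Matrix (Fin n) (Fin n) ℝ) : ℝ :=
  g0 (p1 X) (p1 Y) + s * g0 (p2 X) (p2 Y) + t * g0 (p3 X) (p3 Y)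

/-- The symmetric part `U_{s,t}` of the Nomizu function of the Levi-Civita connection of
`g_{s,t}`. -/
noncomputable def Ust (s t : ℝ) (X Y : Matrix (Fin n) (Fin n) ℝ) :
    Matrix (Fin n) (Fin n) ℝ :=
  ((t - s) / 2) • (br (p2 X) (p3 Y) + br (p2 Y) (p3 X)) +
  ((t - 1) / (2 * s)) • (br (p1 X) (p3 Y) + br (p1 Y) (p3 X)) +
  ((s - 1) / (2 * t)) • (br (p1 X) (p2 Y) + br (p1 Y) (p2 X))

/-- The block-diagonal matrix `B₄ = diag(1, [[0,1],[-1,0]], -1, …, -1)`. -/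
def B4 : Matrix (Fin n) (Fin n) ℝ :=
  Matrix.of fun i j =>
    if i.val = 0 ∧ j.val = 0 then 1
    else if i.val = 1 ∧ j.val = 2 then 1
    else if i.val = 2 ∧ j.val = 1 then -1
    else if 3 ≤ i.val ∧ i = j then -1
    else 0

/-- `θ = dΦ|𝔪` for the order-4 automorphism: `θ(X) = B₄ X B₄ᵀ`. -/
def th4 (X : Matrix (Fin n) (Fin n) ℝ) : Matrix (Fin n) (Fin n) ℝ := B4 * X * B4ᵀ

/-- The canonical f-structure `f₀ = (1/2)(θ - θ³)` of the 4-symmetric space. -/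
noncomputable def f0 (X : Matrix (Fin n) (Fin n) ℝ) : Matrix (Fin n) (Fin n) ℝ :=
  (1 / 2 : ℝ) • (th4 X - th4 (th4 (th4 X)))

/-- The block-diagonal matrix `B₆ = diag(1, [[1/2,√3/2],[-√3/2,1/2]], -1, …, -1)`. -/
noncomputable def B6 : Matrix (Fin n) (Fin n) ℝ :=
  Matrix.of fun i j =>
    if i.val = 0 ∧ j.val = 0 then 1
    else if i.val = 1 ∧ j.val = 1 then 1 / 2
    else if i.val = 1 ∧ j.val = 2 then Real.sqrt 3 / 2
    else if i.val = 2 ∧ j.val = 1 then -(Real.sqrt 3 / 2)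
    else if i.val = 2 ∧ j.val = 2 then 1 / 2
    else if 3 ≤ i.val ∧ i = j then -1
    else 0

/-- `θ = dΦ|𝔪` for the order-6 automorphism: `θ(X) = B₆ X B₆ᵀ`. -/
noncomputable def th6 (X : Matrix (Fin n) (Fin n) ℝ) : Matrix (Fin n) (Fin n) ℝ :=
  B6 * X * B6ᵀ

/-- `f₁ = (1/√3)(θ - θ⁵)`. -/
noncomputable def f1 (X : Matrix (Fin n) (Fin n) ℝ) : Matrix (Fin n) (Fin n) ℝ :=
  (1 / Real.sqrt 3) • (th6 X - th6 (th6 (th6 (th6 (th6 X)))))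

/-- `f₂ = (1/(2√3))(θ - θ² + θ⁴ - θ⁵)`. -/
noncomputable def f2 (X : Matrix (Fin n) (Fin n) ℝ) : Matrix (Fin n) (Fin n) ℝ :=
  (1 / (2 * Real.sqrt 3)) •
    (th6 X - th6 (th6 X) + th6 (th6 (th6 (th6 X))) - th6 (th6 (th6 (th6 (th6 X)))))

/-- `f₃ = (1/(2√3))(θ + θ² - θ⁴ - θ⁵)`. -/
noncomputable def f3 (X : Matrix (Fin n) (Fin n) ℝ) : Matrix (Fin n) (Fin n) ℝ :=
  (1 / (2 * Real.sqrt 3)) •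
    (th6 X + th6 (th6 X) - th6 (th6 (th6 (th6 X))) - th6 (th6 (th6 (th6 (th6 X)))))

/-- `f₄ = (1/√3)(θ² - θ⁴)`. -/
noncomputable def f4 (X : Matrix (Fin n) (Fin n) ℝ) : Matrix (Fin n) (Fin n) ℝ :=
  (1 / Real.sqrt 3) • (th6 (th6 X) - th6 (th6 (th6 (th6 X))))

/-- The Killing f-structure condition for `f` w.r.t. the metric with characteristic
numbers `(s,t)`: `(1/2)[X, fX]_𝔪 + U_{s,t}(X, fX) - f(U_{s,t}(X,X)) = 0` for all `X ∈ 𝔪`. -/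
def killCond (s t : ℝ) (f : Matrix (Fin n) (Fin n) ℝ → Matrix (Fin n) (Fin n) ℝ) : Prop :=
  ∀ X : Matrix (Fin n) (Fin n) ℝ, inM X →
    (1 / 2 : ℝ) • pM (br X (f X)) + Ust s t X (f X) - f (Ust s t X X) = 0

/-- The nearly Kähler f-structure condition:
`(1/2)[fX, f²X]_𝔪 + U_{s,t}(fX, f²X) - f(U_{s,t}(fX, fX)) = 0` for all `X ∈ 𝔪`. -/
def nkCond (s t : ℝ) (f : Matrix (Fin n) (Fin n) ℝ → Matrix (Fin n) (Fin n) ℝ) : Prop :=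
  ∀ X : Matrix (Fin n) (Fin n) ℝ, inM X →
    (1 / 2 : ℝ) • pM (br (f X) (f (f X))) + Ust s t (f X) (f (f X)) -
      f (Ust s t (f X) (f X)) = 0

/-- The `G₁f` condition:
`f(2·U_{s,t}(fX, f²X) - f(U_{s,t}(fX, fX)) + f(U_{s,t}(f²X, f²X))) = 0` for all `X ∈ 𝔪`. -/
def g1Cond (s t : ℝ) (f : Matrix (Fin n) (Fin n) ℝ → Matrix (Fin n) (Fin n) ℝ) : Prop :=
  ∀ X : Matrix (Fin n) (Fin n) ℝ, inM X →
    f ((2 : ℝ) • Ust s t (f X) (f (f X)) - f (Ust s t (f X) (f X)) +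
      f (Ust s t (f (f X)) (f (f X)))) = 0

end FlagMfld

open FlagMfld


namespace FlagMfld

variable {n : ℕ}

theorem skew_apply {A : Matrix (Fin n) (Fin n) ℝ} (h : Aᵀ = -A) (i j : Fin n) :
    A j i = - A i j := by
  have := congrFun (congrFun h i) j
  simpa using this

theorem mul_supp {A B : Matrix (Fin n) (Fin n) ℝ} {i j : Fin n} (h : (A * B) i j ≠ 0) :
    ∃ k, A i k ≠ 0 ∧ B k j ≠ 0 := by
  rw [Matrix.mul_apply] at h
  obtain ⟨k, -, hk⟩ := Finset.exists_ne_zero_of_sum_ne_zero h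
  exact ⟨k, left_ne_zero_of_mul hk, right_ne_zero_of_mul hk⟩

theorem br_supp {A B : Matrix (Fin n) (Fin n) ℝ} {i j : Fin n} (h : br A B i j ≠ 0) :
    (∃ k, A i k ≠ 0 ∧ B k j ≠ 0) ∨ (∃ k, B i k ≠ 0 ∧ A k j ≠ 0) := by
  by_cases h1 : (A * B) i j = 0
  · right
    apply mul_supp
    intro h2
    apply h
    simp [br, h1, h2]
  · left
    exact mul_supp h1

theorem br_skew {A B : Matrix (Fin n) (Fin n) ℝ} (hA : Aᵀ = -A) (hB : Bᵀ = -B) :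
    (br A B)ᵀ = - br A B := by
  simp only [br, Matrix.transpose_sub, Matrix.transpose_mul, hA, hB]
  simp

theorem br_comm (A B : Matrix (Fin n) (Fin n) ℝ) : br A B = - br B A := by simp [br]

theorem br_diag {A B : Matrix (Fin n) (Fin n) ℝ} (hA : Aᵀ = -A) (hB : Bᵀ = -B) {i j : Fin n}
    (h : br A B i j ≠ 0) : i.val ≠ j.val := by
  intro hij
  have hij := Fin.ext hij
  subst hij
  have := skew_apply (br_skew hA hB) i i
  apply h
  linarith

theorem br23 {A B : Matrix (Fin n) (Fin n) ℝ} (hA : inM2 A) (hB : inM3 B) : inM1 (br A B) := by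
  refine ⟨br_skew hA.1 hB.1, fun i j h => ?_⟩
  rcases br_supp h with ⟨k, h1, h2⟩ | ⟨k, h1, h2⟩
  · have := hA.2 _ _ h1
    have := hB.2 _ _ h2
    omega
  · have := hB.2 _ _ h1
    have := hA.2 _ _ h2
    omega

theorem br13 {A B : Matrix (Fin n) (Fin n) ℝ} (hA : inM1 A) (hB : inM3 B) : inM2 (br A B) := by
  refine ⟨br_skew hA.1 hB.1, fun i j h => ?_⟩
  rcases br_supp h with ⟨k, h1, h2⟩ | ⟨k, h1, h2⟩
  · have := hA.2 _ _ h1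
    have := hB.2 _ _ h2
    omega
  · have := hB.2 _ _ h1
    have := hA.2 _ _ h2
    omega

theorem br12 {A B : Matrix (Fin n) (Fin n) ℝ} (hA : inM1 A) (hB : inM2 B) : inM3 (br A B) := by
  refine ⟨br_skew hA.1 hB.1, fun i j h => ?_⟩
  rcases br_supp h with ⟨k, h1, h2⟩ | ⟨k, h1, h2⟩
  · have := hA.2 _ _ h1
    have := hB.2 _ _ h2
    omega
  · have := hB.2 _ _ h1
    have := hA.2 _ _ h2
    omega

theorem br11 {A B : Matrix (Fin n) (Fin n) ℝ} (hA : inM1 A) (hB : inM1 B) : inH (br A B) := by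
  refine ⟨br_skew hA.1 hB.1, fun i j h => ?_⟩
  have hd := br_diag hA.1 hB.1 h
  rcases br_supp h with ⟨k, h1, h2⟩ | ⟨k, h1, h2⟩
  · have := hA.2 _ _ h1
    have := hB.2 _ _ h2
    omega
  · have := hB.2 _ _ h1
    have := hA.2 _ _ h2
    omega

theorem br22 {A B : Matrix (Fin n) (Fin n) ℝ} (hA : inM2 A) (hB : inM2 B) : inH (br A B) := by
  refine ⟨br_skew hA.1 hB.1, fun i j h => ?_⟩
  have hd := br_diag hA.1 hB.1 h
  rcases br_supp h with ⟨k, h1, h2⟩ | ⟨k, h1, h2⟩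
  · have := hA.2 _ _ h1
    have := hB.2 _ _ h2
    omega
  · have := hB.2 _ _ h1
    have := hA.2 _ _ h2
    omega

theorem br33 {A B : Matrix (Fin n) (Fin n) ℝ} (hA : inM3 A) (hB : inM3 B) : inH (br A B) := by
  refine ⟨br_skew hA.1 hB.1, fun i j h => ?_⟩
  have hd := br_diag hA.1 hB.1 h
  rcases br_supp h with ⟨k, h1, h2⟩ | ⟨k, h1, h2⟩
  · have := hA.2 _ _ h1
    have := hB.2 _ _ h2
    omega
  · have := hB.2 _ _ h1
    have := hA.2 _ _ h2
    omega

theorem proj_keep (c : Prop) [Decidable c] (x : ℝ) (h : x ≠ 0 → c) : (if c then x else 0) = x := by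
  split_ifs with hc
  · rfl
  · by_contra hx
    exact hc (h (Ne.symm hx))

theorem proj_kill (c : Prop) [Decidable c] (x : ℝ) (h : x ≠ 0 → ¬ c) :
    (if c then x else 0) = 0 := by
  split_ifs with hc
  · by_contra hx
    exact h hx hc
  · rfl

theorem m1_p {A : Matrix (Fin n) (Fin n) ℝ} (h : inM1 A) : p1 A = A ∧ p2 A = 0 ∧ p3 A = 0 := by
  refine ⟨?_, ?_, ?_⟩ <;> ext i j
  · exact proj_keep _ _ (h.2 i j)
  · exact proj_kill _ _ fun hx => by have := h.2 i j hx; omega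
  · exact proj_kill _ _ fun hx => by have := h.2 i j hx; omega

theorem m2_p {A : Matrix (Fin n) (Fin n) ℝ} (h : inM2 A) : p1 A = 0 ∧ p2 A = A ∧ p3 A = 0 := by
  refine ⟨?_, ?_, ?_⟩ <;> ext i j
  · exact proj_kill _ _ fun hx => by have := h.2 i j hx; omega
  · exact proj_keep _ _ (h.2 i j)
  · exact proj_kill _ _ fun hx => by have := h.2 i j hx; omega

theorem m3_p {A : Matrix (Fin n) (Fin n) ℝ} (h : inM3 A) : p1 A = 0 ∧ p2 A = 0 ∧ p3 A = A := by
  refine ⟨?_, ?_, ?_⟩ <;> ext i j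
  · exact proj_kill _ _ fun hx => by have := h.2 i j hx; omega
  · exact proj_kill _ _ fun hx => by have := h.2 i j hx; omega
  · exact proj_keep _ _ (h.2 i j)

theorem h_p {A : Matrix (Fin n) (Fin n) ℝ} (h : inH A) : p1 A = 0 ∧ p2 A = 0 ∧ p3 A = 0 := by
  refine ⟨?_, ?_, ?_⟩ <;> ext i j
  · exact proj_kill _ _ fun hx => by have := h.2 i j hx; omega
  · exact proj_kill _ _ fun hx => by have := h.2 i j hx; omega
  · exact proj_kill _ _ fun hx => by have := h.2 i j hx; omega

theorem p_add (A B : Matrix (Fin n) (Fin n) ℝ) :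
    p1 (A + B) = p1 A + p1 B ∧ p2 (A + B) = p2 A + p2 B ∧ p3 (A + B) = p3 A + p3 B := by
  refine ⟨?_, ?_, ?_⟩ <;> ext i j <;> simp only [p1, p2, p3, Matrix.of_apply, Matrix.add_apply] <;>
    split_ifs <;> simp

theorem p_smul (c : ℝ) (A : Matrix (Fin n) (Fin n) ℝ) :
    p1 (c • A) = c • p1 A ∧ p2 (c • A) = c • p2 A ∧ p3 (c • A) = c • p3 A := by
  refine ⟨?_, ?_, ?_⟩ <;> ext i j <;> simp [p1, p2, p3]

theorem p_pM (A : Matrix (Fin n) (Fin n) ℝ) :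
    p1 (pM A) = p1 A ∧ p2 (pM A) = p2 A ∧ p3 (pM A) = p3 A := by
  refine ⟨?_, ?_, ?_⟩ <;> ext i j <;> simp only [p1, p2, p3, pM, Matrix.of_apply] <;>
    split_ifs <;> first | rfl | omega

theorem p1_mem {A : Matrix (Fin n) (Fin n) ℝ} (h : Aᵀ = -A) : inM1 (p1 A) := by
  constructor
  · ext i j
    have := skew_apply h i j
    simp only [p1, Matrix.of_apply, Matrix.transpose_apply, Matrix.neg_apply]
    split_ifs <;> first | omega | simp [this]
  · intro i j hx
    by_contra hc
    exact hx (if_neg hc)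

theorem p2_mem {A : Matrix (Fin n) (Fin n) ℝ} (h : Aᵀ = -A) : inM2 (p2 A) := by
  constructor
  · ext i j
    have := skew_apply h i j
    simp only [p2, Matrix.of_apply, Matrix.transpose_apply, Matrix.neg_apply]
    split_ifs <;> first | omega | simp [this]
  · intro i j hx
    by_contra hc
    exact hx (if_neg hc)

theorem p3_mem {A : Matrix (Fin n) (Fin n) ℝ} (h : Aᵀ = -A) : inM3 (p3 A) := by
  constructor
  · ext i j
    have := skew_apply h i j
    simp only [p3, Matrix.of_apply, Matrix.transpose_apply, Matrix.neg_apply]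
    split_ifs <;> first | omega | simp [this]
  · intro i j hx
    by_contra hc
    exact hx (if_neg hc)

theorem decomp {A : Matrix (Fin n) (Fin n) ℝ} (h : inM A) : A = p1 A + p2 A + p3 A := by
  obtain ⟨h1, h2, h3⟩ := h
  ext i j
  have hs := skew_apply h1 i j
  simp only [p1, p2, p3, Matrix.of_apply, Matrix.add_apply]
  by_cases c1 : i.val = 1 ∧ j.val = 2
  · simp [h2 i j c1.1 c1.2]
  by_cases c2 : i.val = 2 ∧ j.val = 1
  · have : A i j = 0 := by
      have := h2 j i c2.2 c2.1
      linarith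
    simp [this]
  by_cases c3 : 3 ≤ i.val ∧ 3 ≤ j.val
  · simp [h3 i j c3.1 c3.2]
  by_cases c4 : i = j
  · subst c4
    have : A i i = 0 := by linarith
    simp [this]
  have c5 : i.val ≠ j.val := fun h => c4 (Fin.ext h)
  split_ifs <;> first | omega | simp

theorem inM_of {A B C : Matrix (Fin n) (Fin n) ℝ} (hA : inM1 A) (hB : inM2 B) (hC : inM3 C)
    (a b c : ℝ) : inM (a • A + b • B + c • C) := by
  refine ⟨?_, ?_, ?_⟩
  · simp only [Matrix.transpose_add, Matrix.transpose_smul, hA.1, hB.1, hC.1, smul_neg]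
    abel
  all_goals
    intro i j hi hj
    have h1 : A i j = 0 := by
      by_contra h
      have := hA.2 i j h
      omega
    have h2 : B i j = 0 := by
      by_contra h
      have := hB.2 i j h
      omega
    have h3 : C i j = 0 := by
      by_contra h
      have := hC.2 i j h
      omega
    simp [h1, h2, h3]

theorem m1_add {A B : Matrix (Fin n) (Fin n) ℝ} (hA : inM1 A) (hB : inM1 B) : inM1 (A + B) := by
  refine ⟨by rw [Matrix.transpose_add, hA.1, hB.1]; abel, fun i j h => ?_⟩
  by_cases h1 : A i j = 0
  · exact hB.2 i j (by simpa [h1] using h)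
  · exact hA.2 i j h1

theorem m2_add {A B : Matrix (Fin n) (Fin n) ℝ} (hA : inM2 A) (hB : inM2 B) : inM2 (A + B) := by
  refine ⟨by rw [Matrix.transpose_add, hA.1, hB.1]; abel, fun i j h => ?_⟩
  by_cases h1 : A i j = 0
  · exact hB.2 i j (by simpa [h1] using h)
  · exact hA.2 i j h1

theorem m3_add {A B : Matrix (Fin n) (Fin n) ℝ} (hA : inM3 A) (hB : inM3 B) : inM3 (A + B) := by
  refine ⟨by rw [Matrix.transpose_add, hA.1, hB.1]; abel, fun i j h => ?_⟩
  by_cases h1 : A i j = 0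
  · exact hB.2 i j (by simpa [h1] using h)
  · exact hA.2 i j h1

theorem p_neg (A : Matrix (Fin n) (Fin n) ℝ) :
    p1 (-A) = - p1 A ∧ p2 (-A) = - p2 A ∧ p3 (-A) = - p3 A := by
  have := p_smul (-1) A
  simpa using this

/-- Components of the bracket. -/
theorem p_br {Z Y : Matrix (Fin n) (Fin n) ℝ} (hZ : inM Z) (hY : inM Y) :
    p1 (br Z Y) = br (p2 Z) (p3 Y) - br (p2 Y) (p3 Z) ∧
    p2 (br Z Y) = br (p1 Z) (p3 Y) - br (p1 Y) (p3 Z) ∧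
    p3 (br Z Y) = br (p1 Z) (p2 Y) - br (p1 Y) (p2 Z) := by
  have z1 := p1_mem hZ.1
  have z2 := p2_mem hZ.1
  have z3 := p3_mem hZ.1
  have y1 := p1_mem hY.1
  have y2 := p2_mem hY.1
  have y3 := p3_mem hY.1
  have e : br Z Y = br (p1 Z) (p1 Y) + br (p2 Z) (p2 Y) + br (p3 Z) (p3 Y)
      + br (p2 Z) (p3 Y) + -br (p2 Y) (p3 Z) + br (p1 Z) (p3 Y) + -br (p1 Y) (p3 Z)
      + br (p1 Z) (p2 Y) + -br (p1 Y) (p2 Z) := by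
    conv_lhs => rw [decomp hZ, decomp hY]
    simp only [br]
    noncomm_ring
  obtain ⟨a1, a2, a3⟩ := h_p (br11 z1 y1)
  obtain ⟨b1, b2, b3⟩ := h_p (br22 z2 y2)
  obtain ⟨c1, c2, c3⟩ := h_p (br33 z3 y3)
  obtain ⟨d1, d2, d3⟩ := m1_p (br23 z2 y3)
  obtain ⟨e1, e2, e3⟩ := m1_p (br23 y2 z3)
  obtain ⟨f1, f2, f3⟩ := m2_p (br13 z1 y3)
  obtain ⟨g1, g2, g3⟩ := m2_p (br13 y1 z3)
  obtain ⟨h1, h2, h3⟩ := m3_p (br12 z1 y2)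
  obtain ⟨i1, i2, i3⟩ := m3_p (br12 y1 z2)
  rw [e]
  refine ⟨?_, ?_, ?_⟩
  · simp only [(p_add _ _).1, (p_neg _).1, a1, b1, c1, d1, e1, f1, g1, h1, i1]
    abel
  · simp only [(p_add _ _).2.1, (p_neg _).2.1, a2, b2, c2, d2, e2, f2, g2, h2, i2]
    abel
  · simp only [(p_add _ _).2.2, (p_neg _).2.2, a3, b3, c3, d3, e3, f3, g3, h3, i3]
    abel

theorem Ust_p {X Y : Matrix (Fin n) (Fin n) ℝ} (hX : inM X) (hY : inM Y) (s t : ℝ) :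
    inM (Ust s t X Y) ∧
    p1 (Ust s t X Y) = ((t - s) / 2) • (br (p2 X) (p3 Y) + br (p2 Y) (p3 X)) ∧
    p2 (Ust s t X Y) = ((t - 1) / (2 * s)) • (br (p1 X) (p3 Y) + br (p1 Y) (p3 X)) ∧
    p3 (Ust s t X Y) = ((s - 1) / (2 * t)) • (br (p1 X) (p2 Y) + br (p1 Y) (p2 X)) := by
  have x1 := p1_mem hX.1
  have x2 := p2_mem hX.1
  have x3 := p3_mem hX.1
  have y1 := p1_mem hY.1
  have y2 := p2_mem hY.1
  have y3 := p3_mem hY.1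
  have A := m1_add (br23 x2 y3) (br23 y2 x3)
  have B := m2_add (br13 x1 y3) (br13 y1 x3)
  have C := m3_add (br12 x1 y2) (br12 y1 x2)
  refine ⟨inM_of A B C _ _ _, ?_, ?_, ?_⟩
  · rw [Ust, (p_add _ _).1, (p_add _ _).1, (p_smul _ _).1, (p_smul _ _).1, (p_smul _ _).1,
      (m1_p A).1, (m2_p B).1, (m3_p C).1]
    simp
  · rw [Ust, (p_add _ _).2.1, (p_add _ _).2.1, (p_smul _ _).2.1, (p_smul _ _).2.1,
      (p_smul _ _).2.1, (m1_p A).2.1, (m2_p B).2.1, (m3_p C).2.1]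
    simp
  · rw [Ust, (p_add _ _).2.2, (p_add _ _).2.2, (p_smul _ _).2.2, (p_smul _ _).2.2,
      (p_smul _ _).2.2, (m1_p A).2.2, (m2_p B).2.2, (m3_p C).2.2]
    simp

theorem g0_comm (A B : Matrix (Fin n) (Fin n) ℝ) : g0 A B = g0 B A := by
  unfold g0
  rw [← Matrix.trace_transpose]
  simp

theorem g0_add (A B C : Matrix (Fin n) (Fin n) ℝ) : g0 (A + B) C = g0 A C + g0 B C := by
  simp only [g0, Matrix.transpose_add, Matrix.add_mul, Matrix.trace_add]
  ring

theorem g0_sub (A B C : Matrix (Fin n) (Fin n) ℝ) : g0 (A - B) C = g0 A C - g0 B C := by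
  simp only [g0, Matrix.transpose_sub, Matrix.sub_mul, Matrix.trace_sub]
  ring

theorem g0_smul (c : ℝ) (A C : Matrix (Fin n) (Fin n) ℝ) : g0 (c • A) C = c * g0 A C := by
  simp only [g0, Matrix.transpose_smul, Matrix.smul_mul, Matrix.trace_smul, smul_eq_mul]
  ring

theorem g0_br {A B C : Matrix (Fin n) (Fin n) ℝ} (hA : Aᵀ = -A) (hB : Bᵀ = -B) (hC : Cᵀ = -C) :
    g0 (br A B) C = g0 (br B C) A ∧ g0 (br A B) C = - g0 (br B A) C := by
  constructor
  · simp only [g0, br_skew hA hB, br_skew hB hC]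
    simp only [br, Matrix.neg_mul, Matrix.sub_mul, Matrix.trace_sub, Matrix.trace_neg]
    rw [Matrix.trace_mul_cycle A B C, Matrix.trace_mul_cycle B A C,
      Matrix.trace_mul_cycle C A B, Matrix.trace_mul_cycle C B A]
    first | done | ring
  · rw [br_comm A B, ← neg_one_smul ℝ (br B A), g0_smul]
    ring

theorem g0_self (hn : 4 ≤ n) {A : Matrix (Fin n) (Fin n) ℝ} :
    0 ≤ g0 A A ∧ (g0 A A = 0 → A = 0) := by
  have hn' : (0 : ℝ) < (n : ℝ) - 1 := by
    have : (4 : ℝ) ≤ n := by exact_mod_cast hn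
    linarith
  have e : (Aᵀ * A).trace = ∑ j, ∑ i, A i j * A i j := by
    simp [Matrix.trace, Matrix.mul_apply]
  constructor
  · rw [g0, e]
    exact mul_nonneg hn'.le (Finset.sum_nonneg fun j _ => Finset.sum_nonneg fun i _ =>
      mul_self_nonneg _)
  · intro h
    rw [g0, e] at h
    have h := (mul_eq_zero.mp h).resolve_left hn'.ne'
    ext i j
    rw [Finset.sum_eq_zero_iff_of_nonneg fun j _ => Finset.sum_nonneg fun i _ =>
      mul_self_nonneg _] at h
    have h := h j (Finset.mem_univ _)
    rw [Finset.sum_eq_zero_iff_of_nonneg fun i _ => mul_self_nonneg _] at h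
    exact mul_self_eq_zero.mp (h i (Finset.mem_univ _))

theorem gst_sub (s t : ℝ) (A B C : Matrix (Fin n) (Fin n) ℝ) :
    gst s t (A + (-1 : ℝ) • B) C = gst s t A C - gst s t B C := by
  simp only [gst, p_add, p_smul, g0_add, g0_smul]
  ring

theorem Ust_id {X Y Z : Matrix (Fin n) (Fin n) ℝ} (hX : inM X) (hY : inM Y) (hZ : inM Z)
    {s t : ℝ} (hs : 0 < s) (ht : 0 < t) :
    2 * gst s t (Ust s t X Y) Z = gst s t X (pM (br Z Y)) + gst s t (pM (br Z X)) Y := by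
  obtain ⟨-, u1, u2, u3⟩ := Ust_p hX hY s t
  obtain ⟨a1, a2, a3⟩ := p_br hZ hY
  obtain ⟨b1, b2, b3⟩ := p_br hZ hX
  have z1 := (p1_mem hZ.1).1
  have z2 := (p2_mem hZ.1).1
  have z3 := (p3_mem hZ.1).1
  have x1 := (p1_mem hX.1).1
  have x2 := (p2_mem hX.1).1
  have x3 := (p3_mem hX.1).1
  have y1 := (p1_mem hY.1).1
  have y2 := (p2_mem hY.1).1
  have y3 := (p3_mem hY.1).1
  simp only [gst, p_pM, u1, u2, u3, a1, a2, a3, b1, b2, b3]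
  rw [g0_comm (p1 X), g0_comm (p2 X), g0_comm (p3 X)]
  simp only [g0_smul, g0_add, g0_sub]
  have key : ∀ {A B C : Matrix (Fin n) (Fin n) ℝ}, Aᵀ = -A → Bᵀ = -B → Cᵀ = -C →
      g0 (br A C) B = - g0 (br A B) C ∧ g0 (br B C) A = g0 (br A B) C := by
    intro A B C hA hB hC
    have h1 := (g0_br hA hB hC).1
    have h2 := (g0_br hA hC hB).2
    have h3 := (g0_br hC hA hB).1
    exact ⟨by linarith, by linarith⟩
  rw [(key x1 y2 z3).1, (key x1 y2 z3).2, (key x1 z2 y3).1, (key x1 z2 y3).2,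
    (key y1 x2 z3).1, (key y1 x2 z3).2, (key y1 z2 x3).1, (key y1 z2 x3).2,
    (key z1 x2 y3).1, (key z1 x2 y3).2, (key z1 y2 x3).1, (key z1 y2 x3).2]
  field_simp
  ring

end FlagMfld

/-- For `s,t > 0`, `U_{s,t}` takes values in `𝔪` and is the unique
symmetric bilinear map `U : 𝔪 × 𝔪 → 𝔪` with
`2·g_{s,t}(U(X,Y),Z) = g_{s,t}(X,[Z,Y]_𝔪) + g_{s,t}([Z,X]_𝔪,Y)` for all `X,Y,Z ∈ 𝔪`. -/
theorem statement12 (n : ℕ) (hn : 4 ≤ n) (s t : ℝ) (hs : 0 < s) (ht : 0 < t) :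
    -- U_{s,t} takes values in 𝔪
    (∀ X Y : Matrix (Fin n) (Fin n) ℝ, inM X → inM Y → inM (Ust s t X Y)) ∧
    -- U_{s,t} is symmetric
    (∀ X Y : Matrix (Fin n) (Fin n) ℝ, inM X → inM Y → Ust s t X Y = Ust s t Y X) ∧
    -- defining identity
    (∀ X Y Z : Matrix (Fin n) (Fin n) ℝ, inM X → inM Y → inM Z →
      2 * gst s t (Ust s t X Y) Z =
        gst s t X (pM (br Z Y)) + gst s t (pM (br Z X)) Y) ∧
    -- uniqueness among symmetric bilinear maps 𝔪 × 𝔪 → 𝔪 satisfying the identity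
    (∀ U' : Matrix (Fin n) (Fin n) ℝ → Matrix (Fin n) (Fin n) ℝ → Matrix (Fin n) (Fin n) ℝ,
      (∀ X Y : Matrix (Fin n) (Fin n) ℝ, inM X → inM Y → inM (U' X Y)) →
      (∀ X Y : Matrix (Fin n) (Fin n) ℝ, inM X → inM Y → U' X Y = U' Y X) →
      (∀ (c : ℝ) (X Y : Matrix (Fin n) (Fin n) ℝ), inM X → inM Y →
        U' (c • X) Y = c • U' X Y) →
      (∀ X X' Y : Matrix (Fin n) (Fin n) ℝ, inM X → inM X' → inM Y →
        U' (X + X') Y = U' X Y + U' X' Y) →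
      (∀ X Y Z : Matrix (Fin n) (Fin n) ℝ, inM X → inM Y → inM Z →
        2 * gst s t (U' X Y) Z =
          gst s t X (pM (br Z Y)) + gst s t (pM (br Z X)) Y) →
      ∀ X Y : Matrix (Fin n) (Fin n) ℝ, inM X → inM Y → U' X Y = Ust s t X Y) := by
  refine ⟨fun X Y hX hY => (Ust_p hX hY s t).1, ?_, fun X Y Z hX hY hZ => Ust_id hX hY hZ hs ht, ?_⟩
  · intro X Y _ _
    rw [Ust, Ust, add_comm (br (p2 X) _), add_comm (br (p1 X) (p3 Y)),
      add_comm (br (p1 X) (p2 Y))]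
  · intro U' hU _ _ _ hid X Y hX hY
    have hV := (Ust_p hX hY s t).1
    have hW := hU X Y hX hY
    have hD : inM (U' X Y + (-1 : ℝ) • Ust s t X Y) := by
      refine ⟨?_, fun i j hi hj => ?_, fun i j hi hj => ?_⟩
      · rw [Matrix.transpose_add, Matrix.transpose_smul, hV.1, hW.1]
        simp [add_comm]
      · simp [hV.2.1 i j hi hj, hW.2.1 i j hi hj]
      · simp [hV.2.2 i j hi hj, hW.2.2 i j hi hj]
    have h0 := gst_sub s t (U' X Y) (Ust s t X Y) (U' X Y + (-1 : ℝ) • Ust s t X Y)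
    have h1 := hid X Y _ hX hY hD
    have h2 := Ust_id hX hY hD hs ht
    have hz : U' X Y + (-1 : ℝ) • Ust s t X Y = 0 := by
      generalize U' X Y + (-1 : ℝ) • Ust s t X Y = D at *
      have h3 : gst s t D D = 0 := by linarith
      unfold gst at h3
      obtain ⟨n1, e1⟩ := g0_self hn (A := p1 D)
      obtain ⟨n2, e2⟩ := g0_self hn (A := p2 D)
      obtain ⟨n3, e3⟩ := g0_self hn (A := p3 D)
      have m2 := mul_nonneg hs.le n2
      have m3 := mul_nonneg ht.le n3
      have q1 := e1 (by linarith)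
      have q2 := e2 ((mul_eq_zero.mp (show s * g0 (p2 D) (p2 D) = 0 by linarith)).resolve_left hs.ne')
      have q3 := e3 ((mul_eq_zero.mp (show t * g0 (p3 D) (p3 D) = 0 by linarith)).resolve_left ht.ne')
      rw [decomp hD, q1, q2, q3]
      simp
    have : U' X Y - Ust s t X Y = 0 := by simpa [sub_eq_add_neg] using hz
    exact sub_eq_zero.mp this
end

section
/- Consider SO(n)/SO(2)×SO(n−3) as a 4-symmetric space with its unique canonical f-structure f₀. For s, t > 0, f₀ satisfies the Killing condition for (s,t) — that is, (1/2)[X, f₀X]_𝔪 + U_{s,t}(X, f₀X) − f₀(U_{s,t}(X,X)) = 0 for all X ∈ 𝔪 — if and only if s = 1 and t = 4/3. In other words, f₀ is a Killing f-structure exactly for the invariant Riemannian metric with characteristic numbers (1, 4/3). -/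
open Matrix

open FlagMfld

namespace FlagMfld

/-- Explicit parametrization of `𝔪`. -/
def mkM {m : ℕ} (x y : ℝ) (A B u : Fin m → ℝ) : Matrix (Fin (m+3)) (Fin (m+3)) ℝ :=
  Matrix.of (vecCons (vecCons 0 (vecCons x (vecCons y u)))
    (vecCons (vecCons (-x) (vecCons 0 (vecCons 0 A)))
    (vecCons (vecCons (-y) (vecCons 0 (vecCons 0 B)))
     (fun j => vecCons (-u j) (vecCons (-A j) (vecCons (-B j) 0))))))

theorem ext3 {m : ℕ} {X Y : Matrix (Fin (m+3)) (Fin (m+3)) ℝ}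
    (h : ∀ i j, X i j = Y i j) : X = Y := Matrix.ext h

theorem forall3 {m : ℕ} {P : Fin (m+3) → Prop} (h0 : P 0) (h1 : P (Fin.succ 0))
    (h2 : P (Fin.succ (Fin.succ 0))) (h3 : ∀ j : Fin m, P j.succ.succ.succ) : ∀ i, P i := by
  intro i
  refine Fin.cases h0 (fun i => ?_) i
  refine Fin.cases h1 (fun i => ?_) i
  exact Fin.cases h2 h3 i

variable {m : ℕ} (x y x' y' : ℝ) (A B u A' B' u' : Fin m → ℝ)

theorem exists_mkM {X : Matrix (Fin (m+3)) (Fin (m+3)) ℝ} (h : inM X) :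
    ∃ x y A B u, X = mkM x y A B u := by
  obtain ⟨hs, h12, h33⟩ := h
  have hs' : ∀ i j, X j i = - X i j := fun i j => congrFun (congrFun hs i) j
  have hd : ∀ i, X i i = 0 := fun i => by linarith [hs' i i]
  have e12 : X (Fin.succ 0) (Fin.succ (Fin.succ 0)) = 0 := h12 _ _ (by simp) (by simp)
  refine ⟨X 0 (Fin.succ 0), X 0 (Fin.succ (Fin.succ 0)), fun j => X (Fin.succ 0) j.succ.succ.succ,
    fun j => X (Fin.succ (Fin.succ 0)) j.succ.succ.succ, fun j => X 0 j.succ.succ.succ, ?_⟩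
  refine Matrix.ext (forall3 (forall3 ?_ ?_ ?_ ?_) (forall3 ?_ ?_ ?_ ?_) (forall3 ?_ ?_ ?_ ?_)
    (fun i => forall3 ?_ ?_ ?_ ?_))
  all_goals try intro j
  all_goals simp only [mkM, Matrix.of_apply, cons_val_zero, cons_val_succ]
  · exact hd _
  · exact hs' _ _
  · exact hd _
  · exact e12
  · exact hs' _ _
  · rw [hs', e12, neg_zero]
  · exact hd _
  · exact hs' _ _
  · exact hs' _ _
  · exact hs' _ _
  · exact h33 _ _ (by simp) (by simp)

theorem inM_mkM : inM (mkM x y A B u) := by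
  refine ⟨?_, ?_, ?_⟩
  · refine Matrix.ext (forall3 (forall3 ?_ ?_ ?_ ?_) (forall3 ?_ ?_ ?_ ?_) (forall3 ?_ ?_ ?_ ?_)
      (fun i => forall3 ?_ ?_ ?_ ?_))
    all_goals try intro j
    all_goals simp only [mkM, Matrix.of_apply, Matrix.transpose_apply, Matrix.neg_apply,
      cons_val_zero, cons_val_succ, Pi.zero_apply, neg_neg, neg_zero]
  · refine forall3 (forall3 ?_ ?_ ?_ ?_) (forall3 ?_ ?_ ?_ ?_) (forall3 ?_ ?_ ?_ ?_)
      (fun i => forall3 ?_ ?_ ?_ ?_)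
    all_goals simp only [mkM, Matrix.of_apply, Matrix.sub_apply, Matrix.mul_apply, Matrix.transpose_apply,
    Fin.sum_univ_succ, cons_val_zero, cons_val_succ, Fin.val_succ, Fin.val_zero, Pi.zero_apply]
    all_goals simp
  · refine forall3 (forall3 ?_ ?_ ?_ ?_) (forall3 ?_ ?_ ?_ ?_) (forall3 ?_ ?_ ?_ ?_)
      (fun i => forall3 ?_ ?_ ?_ ?_)
    all_goals try intro j
    all_goals simp only [mkM, Matrix.of_apply, Matrix.sub_apply, Matrix.mul_apply, Matrix.transpose_apply,
    Fin.sum_univ_succ, cons_val_zero, cons_val_succ, Fin.val_succ, Fin.val_zero, Pi.zero_apply]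
    all_goals simp

theorem p1_mkM : p1 (mkM x y A B u) = mkM x y 0 0 0 := by
  refine Matrix.ext (forall3 (forall3 ?_ ?_ ?_ ?_) (forall3 ?_ ?_ ?_ ?_) (forall3 ?_ ?_ ?_ ?_)
      (fun i => forall3 ?_ ?_ ?_ ?_))
  all_goals try intro j
  all_goals simp only [p1, mkM, Matrix.of_apply, Matrix.sub_apply, Matrix.mul_apply, Matrix.transpose_apply,
    Fin.sum_univ_succ, cons_val_zero, cons_val_succ, Fin.val_succ, Fin.val_zero, Pi.zero_apply]
  all_goals simp

theorem p2_mkM : p2 (mkM x y A B u) = mkM 0 0 A B 0 := by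
  refine Matrix.ext (forall3 (forall3 ?_ ?_ ?_ ?_) (forall3 ?_ ?_ ?_ ?_) (forall3 ?_ ?_ ?_ ?_)
      (fun i => forall3 ?_ ?_ ?_ ?_))
  all_goals try intro j
  all_goals simp only [p2, mkM, Matrix.of_apply, Matrix.sub_apply, Matrix.mul_apply, Matrix.transpose_apply,
    Fin.sum_univ_succ, cons_val_zero, cons_val_succ, Fin.val_succ, Fin.val_zero, Pi.zero_apply]
  all_goals simp

theorem p3_mkM : p3 (mkM x y A B u) = mkM 0 0 0 0 u := by
  refine Matrix.ext (forall3 (forall3 ?_ ?_ ?_ ?_) (forall3 ?_ ?_ ?_ ?_) (forall3 ?_ ?_ ?_ ?_)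
      (fun i => forall3 ?_ ?_ ?_ ?_))
  all_goals try intro j
  all_goals simp only [p3, mkM, Matrix.of_apply, Matrix.sub_apply, Matrix.mul_apply, Matrix.transpose_apply,
    Fin.sum_univ_succ, cons_val_zero, cons_val_succ, Fin.val_succ, Fin.val_zero, Pi.zero_apply]
  all_goals simp

theorem add_mkM : mkM x y A B u + mkM x' y' A' B' u' =
    mkM (x+x') (y+y') (A+A') (B+B') (u+u') := by
  refine Matrix.ext (forall3 (forall3 ?_ ?_ ?_ ?_) (forall3 ?_ ?_ ?_ ?_) (forall3 ?_ ?_ ?_ ?_)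
      (fun i => forall3 ?_ ?_ ?_ ?_))
  all_goals try intro j
  all_goals simp [mkM, -Fin.succ_zero_eq_one]
  all_goals ring

theorem smul_mkM (c : ℝ) : c • mkM x y A B u =
    mkM (c*x) (c*y) (c•A) (c•B) (c•u) := by
  refine Matrix.ext (forall3 (forall3 ?_ ?_ ?_ ?_) (forall3 ?_ ?_ ?_ ?_) (forall3 ?_ ?_ ?_ ?_)
      (fun i => forall3 ?_ ?_ ?_ ?_))
  all_goals try intro j
  all_goals simp [mkM, -Fin.succ_zero_eq_one]

theorem sub_mkM : mkM x y A B u - mkM x' y' A' B' u' =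
    mkM (x-x') (y-y') (A-A') (B-B') (u-u') := by
  have : mkM x' y' A' B' u' = (-1:ℝ) • mkM (-x') (-y') (-A') (-B') (-u') := by
    rw [smul_mkM]; simp
  rw [sub_eq_add_neg, ← neg_one_smul ℝ (mkM x' y' A' B' u'), smul_mkM, add_mkM]
  simp [sub_eq_add_neg]

theorem pM_br_mkM : pM (br (mkM x y A B u) (mkM x' y' A' B' u')) =
    mkM (A ⬝ᵥ u' - A' ⬝ᵥ u) (B ⬝ᵥ u' - B' ⬝ᵥ u) (x' • u - x • u') (y' • u - y • u')
      (x • A' + y • B' - x' • A - y' • B) := by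
  refine Matrix.ext (forall3 (forall3 ?_ ?_ ?_ ?_) (forall3 ?_ ?_ ?_ ?_) (forall3 ?_ ?_ ?_ ?_)
      (fun i => forall3 ?_ ?_ ?_ ?_))
  all_goals try intro j
  all_goals simp only [pM, br, mkM, Matrix.of_apply, Matrix.sub_apply, Matrix.mul_apply, Matrix.transpose_apply,
    Fin.sum_univ_succ, cons_val_zero, cons_val_succ, Fin.val_succ, Fin.val_zero, Pi.zero_apply]
  all_goals simp [dotProduct, mul_comm]
  all_goals ring

theorem br23_mkM : br (mkM 0 0 A B 0) (mkM 0 0 0 0 u) =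
    mkM (A ⬝ᵥ u) (B ⬝ᵥ u) 0 0 0 := by
  refine Matrix.ext (forall3 (forall3 ?_ ?_ ?_ ?_) (forall3 ?_ ?_ ?_ ?_) (forall3 ?_ ?_ ?_ ?_)
      (fun i => forall3 ?_ ?_ ?_ ?_))
  all_goals try intro j
  all_goals simp only [br, mkM, Matrix.of_apply, Matrix.sub_apply, Matrix.mul_apply, Matrix.transpose_apply,
    Fin.sum_univ_succ, cons_val_zero, cons_val_succ, Fin.val_succ, Fin.val_zero, Pi.zero_apply]
  all_goals simp [dotProduct, mul_comm]

theorem br13_mkM : br (mkM x y 0 0 0) (mkM 0 0 0 0 u) =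
    mkM 0 0 (-x • u) (-y • u) 0 := by
  refine Matrix.ext (forall3 (forall3 ?_ ?_ ?_ ?_) (forall3 ?_ ?_ ?_ ?_) (forall3 ?_ ?_ ?_ ?_)
      (fun i => forall3 ?_ ?_ ?_ ?_))
  all_goals try intro j
  all_goals simp only [br, mkM, Matrix.of_apply, Matrix.sub_apply, Matrix.mul_apply, Matrix.transpose_apply,
    Fin.sum_univ_succ, cons_val_zero, cons_val_succ, Fin.val_succ, Fin.val_zero, Pi.zero_apply]
  all_goals simp [dotProduct, mul_comm]

theorem br12_mkM : br (mkM x y 0 0 0) (mkM 0 0 A B 0) =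
    mkM 0 0 0 0 (x • A + y • B) := by
  refine Matrix.ext (forall3 (forall3 ?_ ?_ ?_ ?_) (forall3 ?_ ?_ ?_ ?_) (forall3 ?_ ?_ ?_ ?_)
      (fun i => forall3 ?_ ?_ ?_ ?_))
  all_goals try intro j
  all_goals simp only [br, mkM, Matrix.of_apply, Matrix.sub_apply, Matrix.mul_apply, Matrix.transpose_apply,
    Fin.sum_univ_succ, cons_val_zero, cons_val_succ, Fin.val_succ, Fin.val_zero, Pi.zero_apply]
  all_goals simp [dotProduct, mul_comm]
  all_goals ring

theorem th4_mkM : th4 (mkM x y A B u) = mkM y (-x) (-B) A (-u) := by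
  refine Matrix.ext (forall3 (forall3 ?_ ?_ ?_ ?_) (forall3 ?_ ?_ ?_ ?_) (forall3 ?_ ?_ ?_ ?_)
      (fun i => forall3 ?_ ?_ ?_ ?_))
  all_goals try intro j
  all_goals simp only [th4, B4, Fin.ext_iff, mkM, Matrix.of_apply, Matrix.sub_apply, Matrix.mul_apply, Matrix.transpose_apply,
    Fin.sum_univ_succ, cons_val_zero, cons_val_succ, Fin.val_succ, Fin.val_zero, Pi.zero_apply]
  all_goals simp
  all_goals simp [← Fin.ext_iff]

theorem f0_mkM : f0 (mkM x y A B u) = mkM y (-x) (-B) A 0 := by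
  rw [f0, th4_mkM, th4_mkM, th4_mkM, sub_mkM, smul_mkM]
  congr 1
  · ring
  · ring
  · ext j; simp; ring
  · ext j; simp; ring
  · ext j; simp

theorem Ust_mkM (s t : ℝ) : Ust s t (mkM x y A B u) (mkM x' y' A' B' u') =
    mkM ((t-s)/2 * (A ⬝ᵥ u' + A' ⬝ᵥ u)) ((t-s)/2 * (B ⬝ᵥ u' + B' ⬝ᵥ u))
      (-((t-1)/(2*s)) • (x • u' + x' • u)) (-((t-1)/(2*s)) • (y • u' + y' • u))
      (((s-1)/(2*t)) • (x • A' + y • B' + x' • A + y' • B)) := by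
  simp only [Ust, p1_mkM, p2_mkM, p3_mkM, br12_mkM, br13_mkM, br23_mkM, add_mkM, smul_mkM]
  congr 1
  · ring
  · ring
  · ext j; simp; ring
  · ext j; simp; ring
  · ext j; simp; ring

theorem kill_mkM (s t : ℝ) :
    (1 / 2 : ℝ) • pM (br (mkM x y A B u) (f0 (mkM x y A B u)))
      + Ust s t (mkM x y A B u) (f0 (mkM x y A B u))
      - f0 (Ust s t (mkM x y A B u) (mkM x y A B u)) =
    mkM ((1/2 - 3*(t-s)/2) * (B ⬝ᵥ u)) (-(1/2 - 3*(t-s)/2) * (A ⬝ᵥ u))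
      ((1/2 - 3*((t-1)/(2*s))) • (y • u)) (-(1/2 - 3*((t-1)/(2*s))) • (x • u))
      (((s-1)/t) • (y • A - x • B)) := by
  simp only [f0_mkM, Ust_mkM, pM_br_mkM, add_mkM, smul_mkM, sub_mkM]
  congr 1
  · simp; ring
  · simp; ring
  · ext j; simp; ring
  · ext j; simp; ring
  · ext j; simp; ring

end FlagMfld

/-- On the 4-symmetric space `SO(n)/SO(2)×SO(n-3)`, the canonical
f-structure `f₀` is a Killing f-structure for the invariant metric with characteristic
numbers `(s,t)` iff `s = 1` and `t = 4/3`. -/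
theorem statement13 (n : ℕ) (hn : 4 ≤ n) (s t : ℝ) (hs : 0 < s) (ht : 0 < t) :
    killCond (n := n) s t f0 ↔ (s = 1 ∧ t = 4 / 3) := by
  obtain ⟨m, rfl⟩ : ∃ m, n = m + 1 + 3 := ⟨n - 4, by omega⟩
  constructor
  · intro h
    have h1 := h _ (inM_mkM 1 0 0 1 1)
    have h2 := h _ (inM_mkM 1 0 (fun i => if i = 0 then 1 else 0) 0 1)
    rw [kill_mkM] at h1 h2
    have e1 := congrFun (congrFun h1 0) (Fin.succ (Fin.succ (Fin.succ 0)))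
    have e2 := congrFun (congrFun h2 0) (Fin.succ (Fin.succ 0))
    simp only [mkM, Matrix.of_apply, cons_val_zero, cons_val_succ] at e1 e2
    have hs1 : s = 1 := by
      have : (s - 1) / t = 0 := by simpa using e1
      rcases div_eq_zero_iff.1 this with h | h <;> linarith
    simp [dotProduct] at e2
    exact ⟨hs1, by linarith⟩
  · rintro ⟨rfl, rfl⟩ X hX
    obtain ⟨x, y, A, B, u, rfl⟩ := exists_mkM hX
    rw [kill_mkM]
    have : (0 : Matrix (Fin (m+1+3)) (Fin (m+1+3)) ℝ) = (0:ℝ) • mkM 0 0 0 0 0 := by simp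
    rw [this, smul_mkM]
    congr 1
    · norm_num
    · norm_num
    · norm_num
    · norm_num
    · norm_num
end
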